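/- Let B be a binary doubly even [36,6,16] code such that the dual code B⊥ has minimum Hamming weight 3. Then B⊥ has exactly 120 codewords of weight 3 and exactly 945 codewords of weight 4. -/

import Mathlib

noncomputable section

/-- The dual code `B⊥ = {x ∈ F₂ⁿ : x·y = 0 for all y ∈ B}`. -/
def dualCode {n : ℕ} (B : Submodule (ZMod 2) (Fin n → ZMod 2)) : Set (Fin n → ZMod 2) :=
  {x | ∀ y ∈ B, ∑ i, x i * y i = 0}

/-- A binary code is doubly even if every codeword has Hamming weight divisible by 4. -/
def IsDoublyEven {n : ℕ} (B : Submodule (ZMod 2) (Fin n → ZMod 2)) : Prop :=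
  ∀ c ∈ B, 4 ∣ hammingNorm c

/-- A set of binary words has minimum weight `d`:
`d` is the least Hamming weight among its nonzero elements. -/
def HasMinWeight {n : ℕ} (S : Set (Fin n → ZMod 2)) (d : ℕ) : Prop :=
  IsLeast {w : ℕ | ∃ c ∈ S, c ≠ 0 ∧ hammingNorm c = w} d

/-- The number of words of Hamming weight `w` in `S`. -/
def weightCount {n : ℕ} (S : Set (Fin n → ZMod 2)) (w : ℕ) : ℕ :=
  Set.ncard {c ∈ S | hammingNorm c = w}

/-!
For `c ∈ B` put `S(c) = ∑ᵢ (-1)^{cᵢ} = n - 2 wt(c)`. Summing the `w`-th elementary symmetric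
function of the signs `(-1)^{cᵢ}` over `B` gives `|B| A_w`, where `A_w` counts the words of weight
`w` in `B⊥` (MacWilliams); Newton's identities turn this into formulas for the power moments
`∑ S(c)^j`, `j ≤ 4`. When `n = 2s² + s`, `|B| = 4s²` and `s` divides all weights, each `S(c)` is an
odd multiple of `s`, so `S(c)² ≥ s²`, while the second moment, computed with `A₂ = 0`, forces
equality for every `c ≠ 0`. The third and fourth moments then determine `A₃` and `A₄`. Here `s = 4`.
-/

open Finset

theorem addChar_sum_eq_prod {κ A M : Type*} [AddCommMonoid A] [CommMonoid M] (ψ : AddChar A M)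
    (f : κ → A) (t : Finset κ) : ψ (∑ i ∈ t, f i) = ∏ i ∈ t, ψ (f i) :=
  map_prod ψ.toMonoidHom (fun i ↦ Multiplicative.ofAdd (f i)) t

/-- The sign character `a ↦ (-1)^a` of `ZMod 2`. -/
def signChar : AddChar (ZMod 2) ℤ :=
  AddChar.zmodChar 2 (show (-1 : ℤ) ^ 2 = 1 by norm_num)

theorem signChar_eq_one_sub (a : ZMod 2) : signChar a = 1 - 2 * if a ≠ 0 then 1 else 0 := by
  revert a
  decide

theorem signChar_eq_one_iff (a : ZMod 2) : signChar a = 1 ↔ a = 0 := by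
  revert a
  decide

theorem signChar_sq (a : ZMod 2) : signChar a ^ 2 = 1 := by
  revert a
  decide

section Words

variable {ι : Type*}

/-- The binary word with support `t`. -/
def wordOfSupport (t : Finset ι) : ι → ZMod 2 :=
  (t : Set ι).indicator 1

theorem wordOfSupport_injective : Function.Injective (wordOfSupport (ι := ι)) :=
  fun _ _ h ↦ mod_cast Set.indicator_one_inj (ZMod 2) h

variable [Fintype ι]

/-- The character sum `∑ᵢ (-1)^{cᵢ}` of a binary word. -/
def signSum (c : ι → ZMod 2) : ℤ :=
  ∑ i, signChar (c i)

/-- The value at the weight of `c` of the `w`-th Krawtchouk polynomial: the sum of `(-1)^{x·c}` over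
the words `x` of weight `w`, encoded as the `w`-th elementary symmetric function of the signs
`(-1)^{cᵢ}`. -/
def krawtchouk (w : ℕ) (c : ι → ZMod 2) : ℤ :=
  MvPolynomial.eval (fun i ↦ signChar (c i)) (MvPolynomial.esymm ι ℤ w)

theorem hammingNorm_wordOfSupport (t : Finset ι) : hammingNorm (wordOfSupport t) = #t := by
  classical
  simp [hammingNorm, wordOfSupport, Set.indicator_apply]

theorem wordOfSupport_filter_ne_zero (x : ι → ZMod 2) : wordOfSupport {i | x i ≠ 0} = x := by
  have ite_eq : ∀ a : ZMod 2, (if a ≠ 0 then 1 else 0) = a := by decide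
  funext i
  simpa [wordOfSupport, Set.indicator_apply] using ite_eq (x i)

theorem wordOfSupport_dotProduct (t : Finset ι) (c : ι → ZMod 2) :
    wordOfSupport t ⬝ᵥ c = ∑ i ∈ t, c i := by
  classical
  simp [wordOfSupport, dotProduct, Set.indicator_apply]

theorem signSum_eq_card_sub (c : ι → ZMod 2) :
    signSum c = Fintype.card ι - 2 * (hammingNorm c : ℤ) := by
  simp only [signSum, signChar_eq_one_sub, sum_sub_distrib, ← mul_sum, sum_boole, hammingNorm]
  simp

theorem signSum_zero : signSum (0 : ι → ZMod 2) = Fintype.card ι := by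
  simp [signSum_eq_card_sub]

theorem sq_le_signSum_sq {s m : ℤ} {c : ι → ZMod 2} (hcard : (Fintype.card ι : ℤ) = s * (2 * m + 1))
    (hdvd : s ∣ hammingNorm c) : s ^ 2 ≤ signSum c ^ 2 := by
  obtain ⟨j, hj⟩ := hdvd
  have hS : signSum c = s * (2 * (m - j) + 1) := by
    rw [signSum_eq_card_sub, hcard, hj]
    ring
  rw [sq_le_sq, hS, abs_mul]
  exact le_mul_of_one_le_right (abs_nonneg s) (Int.one_le_abs (by omega))

theorem krawtchouk_eq_sum_signChar (w : ℕ) (c : ι → ZMod 2) :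
    krawtchouk w c = ∑ t ∈ powersetCard w univ, signChar (wordOfSupport t ⬝ᵥ c) := by
  simp [krawtchouk, MvPolynomial.esymm, wordOfSupport_dotProduct, addChar_sum_eq_prod]

theorem eval_psum_signChar_succ (k : ℕ) (c : ι → ZMod 2) :
    MvPolynomial.eval (fun i ↦ signChar (c i)) (MvPolynomial.psum ι ℤ (k + 1)) =
      if Even k then signSum c else (Fintype.card ι : ℤ) := by
  simp only [MvPolynomial.psum, map_sum, map_pow, MvPolynomial.eval_X]
  split_ifs with hk
  · obtain ⟨j, rfl⟩ := hk
    simp [← two_mul, pow_succ, pow_mul, signChar_sq, signSum]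
  · obtain ⟨j, hj⟩ := (Nat.not_even_iff_odd.mp hk).add_one
    simp [hj, ← two_mul, pow_mul, signChar_sq]

theorem succ_mul_krawtchouk_succ (k : ℕ) (c : ι → ZMod 2) :
    ((k + 1 : ℕ) : ℤ) * krawtchouk (k + 1) c = (-1) ^ k * ∑ j ∈ range (k + 1),
      (-1) ^ j * krawtchouk j c * if Even (k - j) then signSum c else (Fintype.card ι : ℤ) := by
  have newton := congrArg (MvPolynomial.eval fun i ↦ signChar (c i))
    (MvPolynomial.mul_esymm_eq_sum ι ℤ (k + 1))
  have drop_last : {a ∈ antidiagonal (k + 1) | a.1 < k + 1} =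
      (antidiagonal k).map (.prodMap (.refl ℕ) ⟨Nat.succ, Nat.succ_injective⟩) := by
    simp
  rw [drop_last, sum_map] at newton
  rw [← Nat.sum_antidiagonal_eq_sum_range_succ fun j l ↦
    (-1) ^ j * krawtchouk j c * if Even l then signSum c else (Fintype.card ι : ℤ)]
  simpa [eval_psum_signChar_succ, pow_succ, krawtchouk] using newton

theorem krawtchouk_zero (c : ι → ZMod 2) : krawtchouk 0 c = 1 := by
  simp [krawtchouk]

theorem krawtchouk_one (c : ι → ZMod 2) : krawtchouk 1 c = signSum c := by
  simpa [krawtchouk_zero] using succ_mul_krawtchouk_succ 0 c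

theorem two_mul_krawtchouk_two (c : ι → ZMod 2) :
    2 * krawtchouk 2 c = signSum c ^ 2 - Fintype.card ι := by
  refine (succ_mul_krawtchouk_succ 1 c).trans ?_
  simp only [sum_range_succ, range_zero, sum_empty, krawtchouk_zero, krawtchouk_one, Nat.even_iff,
    Nat.reduceSub, Nat.reduceMod, one_ne_zero, reduceIte]
  ring

theorem six_mul_krawtchouk_three (c : ι → ZMod 2) :
    6 * krawtchouk 3 c = signSum c ^ 3 - (3 * Fintype.card ι - 2) * signSum c := by
  have newton : 3 * krawtchouk 3 c = krawtchouk 2 c * signSum c - signSum c * Fintype.card ι +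
      signSum c := by
    refine (succ_mul_krawtchouk_succ 2 c).trans ?_
    simp only [sum_range_succ, range_zero, sum_empty, krawtchouk_zero, krawtchouk_one, Nat.even_iff,
      Nat.reduceSub, Nat.reduceMod, one_ne_zero, reduceIte]
    ring
  linear_combination 2 * newton + signSum c * two_mul_krawtchouk_two c

theorem twentyFour_mul_krawtchouk_four (c : ι → ZMod 2) :
    24 * krawtchouk 4 c = signSum c ^ 4 - (6 * Fintype.card ι - 8) * signSum c ^ 2 +
      3 * (Fintype.card ι : ℤ) ^ 2 - 6 * Fintype.card ι := by
  have newton : 4 * krawtchouk 4 c = krawtchouk 3 c * signSum c - krawtchouk 2 c * Fintype.card ι +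
      signSum c ^ 2 - Fintype.card ι := by
    refine (succ_mul_krawtchouk_succ 3 c).trans ?_
    simp only [sum_range_succ, range_zero, sum_empty, krawtchouk_zero, krawtchouk_one, Nat.even_iff,
      Nat.reduceSub, Nat.reduceMod, one_ne_zero, reduceIte]
    ring
  linear_combination 6 * newton + signSum c * six_mul_krawtchouk_three c -
    3 * (Fintype.card ι : ℤ) * two_mul_krawtchouk_two c

end Words

section PowerMoments

variable {n : ℕ}

open Classical in
theorem weightCount_eq_card_powersetCard (S : Set (Fin n → ZMod 2)) (w : ℕ) :
    weightCount S w = #{t ∈ powersetCard w univ | wordOfSupport t ∈ S} := by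
  rw [weightCount, ← Set.ncard_coe_finset]
  refine (Set.ncard_congr (fun t _ ↦ wordOfSupport t) ?_ ?_ ?_).symm
  · intro t ht
    simpa [hammingNorm_wordOfSupport, and_comm] using ht
  · exact fun t u _ _ htu ↦ wordOfSupport_injective htu
  · rintro x ⟨hxS, rfl⟩
    refine ⟨({i | x i ≠ 0} : Finset (Fin n)), ?_, wordOfSupport_filter_ne_zero x⟩
    rw [coe_filter, Set.mem_ofPred_eq, mem_powersetCard_univ, wordOfSupport_filter_ne_zero]
    exact ⟨rfl, hxS⟩

theorem weightCount_eq_zero_of_lt {S : Set (Fin n → ZMod 2)} {d w : ℕ}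
    (hS : ∀ x ∈ S, x ≠ 0 → d ≤ hammingNorm x) (hw : 0 < w) (hwd : w < d) :
    weightCount S w = 0 := by
  rw [weightCount, Set.ncard_eq_zero, Set.eq_empty_iff_forall_notMem]
  rintro x ⟨hxS, rfl⟩
  exact hwd.not_ge (hS x hxS (hammingNorm_pos_iff.mp hw))

variable (B : Submodule (ZMod 2) (Fin n → ZMod 2)) [Fintype B]

theorem sum_signChar_dotProduct (x : Fin n → ZMod 2) [Decidable (x ∈ dualCode B)] :
    ∑ c : B, signChar (x ⬝ᵥ c.1) = if x ∈ dualCode B then (Fintype.card B : ℤ) else 0 := by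
  classical
  let dot : B →ₗ[ZMod 2] ZMod 2 := dotProductBilin (ZMod 2) (ZMod 2) x ∘ₗ B.subtype
  have trivial_iff : signChar.compAddMonoidHom dot.toAddMonoidHom = 0 ↔ x ∈ dualCode B := by
    simp [AddChar.ext_iff, signChar_eq_one_iff, dualCode, dot, dotProduct]
  have orthogonality := AddChar.sum_eq_ite (signChar.compAddMonoidHom dot.toAddMonoidHom)
  simp only [trivial_iff] at orthogonality
  exact orthogonality

theorem sum_krawtchouk_eq_card_mul_weightCount (w : ℕ) :
    ∑ c : B, krawtchouk w c.1 = Fintype.card B * (weightCount (dualCode B) w : ℤ) := by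
  classical
  simp_rw [krawtchouk_eq_sum_signChar]
  rw [sum_comm]
  simp_rw [sum_signChar_dotProduct]
  rw [← sum_filter, sum_const, weightCount_eq_card_powersetCard, nsmul_eq_mul, mul_comm]

theorem sum_signSum :
    ∑ c : B, signSum c.1 = Fintype.card B * (weightCount (dualCode B) 1 : ℤ) := by
  simp_rw [← krawtchouk_one, sum_krawtchouk_eq_card_mul_weightCount]

theorem sum_signSum_sq :
    ∑ c : B, signSum c.1 ^ 2 = Fintype.card B * (n + 2 * (weightCount (dualCode B) 2 : ℤ)) := by
  have signSum_sq (c : B) : signSum c.1 ^ 2 = 2 * krawtchouk 2 c.1 + n := by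
    rw [two_mul_krawtchouk_two, Fintype.card_fin]
    ring
  simp only [signSum_sq, sum_add_distrib, ← mul_sum, sum_krawtchouk_eq_card_mul_weightCount,
    sum_const, card_univ, nsmul_eq_mul]
  ring

theorem sum_signSum_cube :
    ∑ c : B, signSum c.1 ^ 3 = Fintype.card B * (6 * (weightCount (dualCode B) 3 : ℤ) +
      (3 * n - 2) * weightCount (dualCode B) 1) := by
  have signSum_cube (c : B) :
      signSum c.1 ^ 3 = 6 * krawtchouk 3 c.1 + (3 * n - 2) * signSum c.1 := by
    rw [six_mul_krawtchouk_three, Fintype.card_fin]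
    ring
  simp only [signSum_cube, sum_add_distrib, ← mul_sum, sum_krawtchouk_eq_card_mul_weightCount,
    sum_signSum]
  ring

theorem sum_signSum_pow_four :
    ∑ c : B, signSum c.1 ^ 4 = Fintype.card B * (24 * (weightCount (dualCode B) 4 : ℤ) +
      (12 * n - 16) * weightCount (dualCode B) 2 + 3 * n ^ 2 - 2 * n) := by
  have signSum_pow_four (c : B) : signSum c.1 ^ 4 =
      24 * krawtchouk 4 c.1 + (6 * n - 8) * signSum c.1 ^ 2 - (3 * n ^ 2 - 6 * n) := by
    rw [twentyFour_mul_krawtchouk_four, Fintype.card_fin]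
    ring
  simp only [signSum_pow_four, sum_add_distrib, sum_sub_distrib, ← mul_sum,
    sum_krawtchouk_eq_card_mul_weightCount, sum_signSum_sq, sum_const, card_univ, nsmul_eq_mul]
  ring

end PowerMoments

section ConstantSquare

variable {n : ℕ} {B : Submodule (ZMod 2) (Fin n → ZMod 2)} [Fintype B] {q : ℤ}

theorem signSum_sq_eq_of_le (hA₂ : weightCount (dualCode B) 2 = 0)
    (hle : ∀ c ∈ B, c ≠ 0 → q ≤ signSum c ^ 2)
    (hbound : (Fintype.card B : ℤ) * n ≤ n ^ 2 + q * (Fintype.card B - 1)) :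
    ∀ c ∈ B, c ≠ 0 → signSum c ^ 2 = q := by
  classical
  have total : ∑ c : B, (signSum c.1 ^ 2 - q) = Fintype.card B * n - Fintype.card B * q := by
    simp [sum_sub_distrib, sum_signSum_sq, hA₂]
  have nonneg (c : B) (hc : c ∈ univ.erase 0) : 0 ≤ signSum c.1 ^ 2 - q :=
    sub_nonneg.mpr (hle c c.2 (by simpa using hc))
  have sum_le : ∑ c ∈ univ.erase (0 : B), (signSum c.1 ^ 2 - q) ≤ 0 := by
    rw [← add_sum_erase _ _ (mem_univ 0), ZeroMemClass.coe_zero, signSum_zero,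
      Fintype.card_fin] at total
    linarith
  have vanish := (sum_eq_zero_iff_of_nonneg nonneg).mp (sum_le.antisymm (sum_nonneg nonneg))
  intro c hcB hc
  exact sub_eq_zero.mp (vanish ⟨c, hcB⟩ (by simpa using hc))

theorem sum_signSum_sq_sub_mul (hq : ∀ c ∈ B, c ≠ 0 → signSum c ^ 2 = q)
    (f : (Fin n → ZMod 2) → ℤ) :
    ∑ c : B, (signSum c.1 ^ 2 - q) * f c.1 = (n ^ 2 - q) * f 0 := by
  rw [sum_eq_single 0]
  · rw [ZeroMemClass.coe_zero, signSum_zero, Fintype.card_fin]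
  · intro c _ hc
    rw [hq c c.2 (by simpa using hc), sub_self, zero_mul]
  · simp

theorem card_mul_six_mul_weightCount_three (hA₁ : weightCount (dualCode B) 1 = 0)
    (hq : ∀ c ∈ B, c ≠ 0 → signSum c ^ 2 = q) :
    Fintype.card B * (6 * (weightCount (dualCode B) 3 : ℤ)) = n * (n ^ 2 - q) := by
  have split (c : B) :
      signSum c.1 ^ 3 = (signSum c.1 ^ 2 - q) * signSum c.1 + q * signSum c.1 := by
    ring
  have moment := sum_signSum_cube B
  simp only [split, sum_add_distrib, sum_signSum_sq_sub_mul hq, ← mul_sum, sum_signSum,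
    signSum_zero, Fintype.card_fin, hA₁] at moment
  linear_combination -moment

theorem card_mul_twentyFour_mul_weightCount_four (hA₂ : weightCount (dualCode B) 2 = 0)
    (hq : ∀ c ∈ B, c ≠ 0 → signSum c ^ 2 = q) :
    Fintype.card B * (24 * (weightCount (dualCode B) 4 : ℤ) + 3 * n ^ 2 - 2 * n) =
      n ^ 2 * (n ^ 2 - q) + Fintype.card B * n * q := by
  have split (c : B) :
      signSum c.1 ^ 4 = (signSum c.1 ^ 2 - q) * signSum c.1 ^ 2 + q * signSum c.1 ^ 2 := by
    ring
  have moment := sum_signSum_pow_four B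
  simp only [split, sum_add_distrib, sum_signSum_sq_sub_mul hq fun c ↦ signSum c ^ 2, ← mul_sum,
    sum_signSum_sq, signSum_zero, Fintype.card_fin, hA₂] at moment
  linear_combination -moment

end ConstantSquare

-- `s` may be negative: its two signs give the lengths `n = 2s² ± |s|`, which are the solutions of
-- `n (|B| - n) = s² (|B| - 1)` for `|B| = 4s²`.
theorem dual_weight_count_36_6_16_general {n : ℕ} {s : ℤ}
    {B : Submodule (ZMod 2) (Fin n → ZMod 2)} (hn : (n : ℤ) = 2 * s ^ 2 + s)
    (hdim : (2 : ℤ) ^ Module.finrank (ZMod 2) B = 4 * s ^ 2)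
    (hdvd : ∀ c ∈ B, s ∣ hammingNorm c)
    (hdual : ∀ x ∈ dualCode B, x ≠ 0 → 3 ≤ hammingNorm x) :
    6 * (weightCount (dualCode B) 3 : ℤ) = s ^ 2 * (s + 1) * (2 * s + 1) ∧
      24 * (weightCount (dualCode B) 4 : ℤ) =
        (s - 1) * s * (s + 1) * (s + 2) * (2 * s - 1) * (2 * s + 1) := by
  classical
  have hcard : (Fintype.card B : ℤ) = 4 * s ^ 2 := by
    rw [Module.card_eq_pow_finrank (K := ZMod 2), ZMod.card, ← hdim]
    norm_cast
  have hA₁ := weightCount_eq_zero_of_lt hdual one_pos (by norm_num)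
  have hA₂ := weightCount_eq_zero_of_lt hdual two_pos (by norm_num)
  have hsq : ∀ c ∈ B, c ≠ 0 → signSum c ^ 2 = s ^ 2 := by
    refine signSum_sq_eq_of_le hA₂ (fun c hc _ ↦ sq_le_signSum_sq (m := s) ?_ (hdvd c hc)) ?_
    · rw [Fintype.card_fin, hn]
      ring
    · rw [hcard, hn]
      exact le_of_eq (by ring)
  have hcard_ne : 4 * s ^ 2 ≠ 0 := hdim ▸ by positivity
  have h₃ := card_mul_six_mul_weightCount_three hA₁ hsq
  have h₄ := card_mul_twentyFour_mul_weightCount_four hA₂ hsq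
  rw [hcard, hn] at h₃ h₄
  exact ⟨mul_left_cancel₀ hcard_ne (by linear_combination h₃),
    mul_left_cancel₀ hcard_ne (by linear_combination h₄)⟩

theorem dual_weight_count_36_6_16 {B : Submodule (ZMod 2) (Fin 36 → ZMod 2)}
    (hdim : Module.finrank (ZMod 2) B = 6)
    (hde : IsDoublyEven B)
    (hmin : HasMinWeight (B : Set (Fin 36 → ZMod 2)) 16)
    (hdual : HasMinWeight (dualCode B) 3) :
    weightCount (dualCode B) 3 = 120 ∧ weightCount (dualCode B) 4 = 945 := by
  have general := dual_weight_count_36_6_16_general (s := 4) (by norm_num) (by simp [hdim])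
    (fun c hc ↦ mod_cast hde c hc) (fun x hx hx₀ ↦ hdual.2 ⟨x, hx, hx₀, rfl⟩)
  omega
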